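/- arXiv:2408.00422 — 4 statements merged into one kernel-verified Lean document; each statement's English description precedes it below -/
import Mathlib

section
/- Fix ε > 0. Let W_n be the step graphons of symmetric nonnegative n×n matrices and let W ∈ L¹((0,1)²) be nonnegative and symmetric, with sup_n ‖W_n‖_{L¹} < ∞ and ‖W_n − W‖_□ → 0. On the set Y of Young measures ν with ν_x([−1,1]) = 1 for a.e. x, define F_n(ν) = ∫₀¹∫₀¹ W_n(x,y)|u(x)−u(y)|² dx dy + (1/ε)∫₀¹ Φ(u(x)) dx if ν = δ_u for some n-step function u : (0,1) → [−1,1], and F_n(ν) = +∞ otherwise. Then F_n Γ-converges on Y, with respect to narrow convergence of Young measures, to the graphon Ginzburg–Landau functional GL^W_ε. -/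
open MeasureTheory Filter
open scoped Classical

noncomputable section

/-- The open unit interval `(0,1)` as a subset of `ℝ`. -/
def I01 : Set ℝ := Set.Ioo 0 1

/-- The double-well potential `Φ(s) = (s² − 1)²`. -/
def Phi (s : ℝ) : ℝ := (s ^ 2 - 1) ^ 2

/-- A Young measure on `(0,1)`: a measurable family of Borel probability measures on `ℝ`. -/
def IsYoungMeasure (ν : ℝ → Measure ℝ) : Prop :=
  Measurable ν ∧ ∀ x, IsProbabilityMeasure (ν x)

/-- The Young measure associated with a measurable function `u`: `(δ_u)_x = δ_{u(x)}`. -/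
def deltaYM (u : ℝ → ℝ) : ℝ → Measure ℝ := fun x => Measure.dirac (u x)

/-- The type of Young measures `ν` with `ν_x([−1,1]) = 1` for a.e. `x ∈ (0,1)`. -/
def YMb := {ν : ℝ → Measure ℝ // IsYoungMeasure ν ∧
  ∀ᵐ x ∂(volume.restrict I01), ν x (Set.Icc (-1 : ℝ) 1) = 1}

/-- Narrow convergence of Young measures. -/
def NarrowConv (ν : ℕ → ℝ → Measure ℝ) (μ : ℝ → Measure ℝ) : Prop :=
  ∀ f : ℝ → ℝ, Continuous f → (∃ C, ∀ s, |f s| ≤ C) →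
    ∀ g : ℝ → ℝ, IntegrableOn g I01 →
      Tendsto (fun n => ∫ x in I01, g x * ∫ t, f t ∂(ν n x)) atTop
        (nhds (∫ x in I01, g x * ∫ t, f t ∂(μ x)))

/-- The cut norm of a kernel `V ∈ L¹((0,1)²)`. -/
def cutNorm (V : ℝ → ℝ → ℝ) : ℝ :=
  sSup {r : ℝ | ∃ f g : ℝ → ℝ, Measurable f ∧ Measurable g ∧
    (∀ x, f x ∈ Set.Icc (-1 : ℝ) 1) ∧ (∀ x, g x ∈ Set.Icc (-1 : ℝ) 1) ∧
    r = |∫ x in I01, ∫ y in I01, V x y * f x * g y|}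

/-- The index `i` with `x ∈ ((i−1)/n, i/n]`, shifted to start at `0`. -/
def stepIdx (n : ℕ) (x : ℝ) : ℕ := ⌈(n : ℝ) * x⌉₊ - 1

/-- The step graphon of an `n × n` matrix `A`. -/
def stepGraphon (n : ℕ) (A : Fin n → Fin n → ℝ) (x y : ℝ) : ℝ :=
  if hx : stepIdx n x < n then
    if hy : stepIdx n y < n then A ⟨stepIdx n x, hx⟩ ⟨stepIdx n y, hy⟩ else 0
  else 0

/-- An `n`-step function: constant on each interval `I_i = ((i−1)/n, i/n]`. -/
def IsStepFun (n : ℕ) (u : ℝ → ℝ) : Prop :=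
  ∀ i : Fin n, ∀ x ∈ Set.Ioc ((i : ℝ) / n) (((i : ℝ) + 1) / n),
    ∀ y ∈ Set.Ioc ((i : ℝ) / n) (((i : ℝ) + 1) / n), u x = u y

/-- The graphon Dirichlet energy of a Young measure. -/
def graphonDirichlet (V : ℝ → ℝ → ℝ) (ν : ℝ → Measure ℝ) : ℝ :=
  ∫ x in I01, ∫ y in I01, V x y * ∫ t, (∫ s, |s - t| ^ 2 ∂(ν x)) ∂(ν y)

/-- The graphon Ginzburg–Landau functional on Young measures. -/
def graphonGL (W : ℝ → ℝ → ℝ) (ε : ℝ) (ν : ℝ → Measure ℝ) : ℝ :=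
  graphonDirichlet W ν + (1 / ε) * ∫ x in I01, ∫ t, Phi t ∂(ν x)

/-- The graph Ginzburg–Landau functional on Young measures: equal to the graph GL energy of
`u` if `ν = δ_u` for some `n`-step function `u : (0,1) → [−1,1]`, and `+∞` otherwise. -/
def graphGLFn (n : ℕ) (Wn : ℝ → ℝ → ℝ) (ε : ℝ) (ν : ℝ → Measure ℝ) : EReal :=
  if h : ∃ u : ℝ → ℝ, IsStepFun n u ∧ Measurable u ∧
      (∀ x, u x ∈ Set.Icc (-1 : ℝ) 1) ∧ ν = deltaYM u then
    (((∫ x in I01, ∫ y in I01, Wn x y * |h.choose x - h.choose y| ^ 2)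
        + (1 / ε) * ∫ x in I01, Phi (h.choose x) : ℝ) : EReal)
  else ⊤

/-- Γ-convergence of functionals with values in `ℝ ∪ {±∞}`. -/
def GammaConv {X : Type*} (conv : (ℕ → X) → X → Prop)
    (F : ℕ → X → EReal) (Flim : X → EReal) : Prop :=
  (∀ (xs : ℕ → X) (x : X), conv xs x →
      Flim x ≤ Filter.liminf (fun n => F n (xs n)) Filter.atTop) ∧
  (∀ x : X, ∃ xs : ℕ → X, conv xs x ∧
      Filter.limsup (fun n => F n (xs n)) Filter.atTop ≤ Flim x)


/-- Lebesgue measure on the unit interval. -/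
abbrev mu : Measure ℝ := volume.restrict I01

instance mu_prob : IsProbabilityMeasure mu := ⟨by simp [I01]⟩

/-- truncation to `[-1,1]` -/
def clamp (t : ℝ) : ℝ := max (-1) (min 1 t)

lemma clamp_cont : Continuous clamp := by unfold clamp; fun_prop

lemma clamp_mem (t : ℝ) : clamp t ∈ Set.Icc (-1 : ℝ) 1 := by
  unfold clamp
  exact ⟨le_max_left _ _, max_le (by norm_num) (min_le_left _ _)⟩

lemma clamp_eq {t : ℝ} (h : t ∈ Set.Icc (-1 : ℝ) 1) : clamp t = t := by
  unfold clamp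
  rw [min_eq_right h.2, max_eq_right h.1]

lemma abs_pow_le_one' {t : ℝ} (h : t ∈ Set.Icc (-1 : ℝ) 1) (p : ℕ) : |t ^ p| ≤ 1 := by
  rw [abs_pow]
  exact pow_le_one₀ (abs_nonneg _) (abs_le.2 h)

lemma clamp_pow_le (p : ℕ) (t : ℝ) : |clamp t ^ p| ≤ 1 := abs_pow_le_one' (clamp_mem t) p

/-- fibrewise integral -/
def mf (f : ℝ → ℝ) (ν : ℝ → Measure ℝ) (x : ℝ) : ℝ := ∫ t, f t ∂(ν x)

lemma mf_meas {ν : ℝ → Measure ℝ} (hν : IsYoungMeasure ν) {f : ℝ → ℝ} (hf : Continuous f) :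
    Measurable (mf f ν) := by
  let κ : ProbabilityTheory.Kernel ℝ ℝ := ⟨ν, hν.1⟩
  have : ProbabilityTheory.IsMarkovKernel κ := ⟨hν.2⟩
  have : StronglyMeasurable (fun x => ∫ t, f t ∂(κ x)) :=
    StronglyMeasurable.integral_kernel (f := f) (κ := κ) hf.stronglyMeasurable
  exact this.measurable

lemma int_of_bdd {α : Type*} [MeasurableSpace α] {m : Measure α} [IsFiniteMeasure m]
    {f : α → ℝ} (hf : Measurable f) {C : ℝ} (hC : ∀ x, |f x| ≤ C) : Integrable f m :=
  Integrable.of_bound hf.aestronglyMeasurable C (Eventually.of_forall hC)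

lemma mf_bound {ν : ℝ → Measure ℝ} (hν : IsYoungMeasure ν) {f : ℝ → ℝ} {C : ℝ}
    (hC : ∀ t, |f t| ≤ C) (x : ℝ) : |mf f ν x| ≤ C := by
  have := hν.2 x
  have := norm_integral_le_of_norm_le_const (μ := ν x) (f := f) (C := C) (Eventually.of_forall hC)
  simpa [mf] using this

lemma weak_prod (W : ℝ → ℝ → ℝ) (hW : Integrable (Function.uncurry W) (mu.prod mu))
    (f g : ℕ → ℝ → ℝ) (f0 g0 : ℝ → ℝ)
    (hfm : ∀ n, Measurable (f n)) (hgm : ∀ n, Measurable (g n))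
    (hfb : ∀ n x, |f n x| ≤ 1) (hgb : ∀ n x, |g n x| ≤ 1)
    (hg0m : Measurable g0) (hg0b : ∀ x, |g0 x| ≤ 1)
    (hf : ∀ h : ℝ → ℝ, Integrable h mu →
      Tendsto (fun n => ∫ x, h x * f n x ∂mu) atTop (nhds (∫ x, h x * f0 x ∂mu)))
    (hg : ∀ h : ℝ → ℝ, Integrable h mu →
      Tendsto (fun n => ∫ x, h x * g n x ∂mu) atTop (nhds (∫ x, h x * g0 x ∂mu))) :
    Tendsto (fun n => ∫ x, ∫ y, W x y * f n x * g n y ∂mu ∂mu) atTop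
      (nhds (∫ x, ∫ y, W x y * f0 x * g0 y ∂mu ∂mu)) := by
  have key : ∀ (a b : ℝ → ℝ), ∫ x, ∫ y, W x y * a x * b y ∂mu ∂mu
      = ∫ x, (∫ y, W x y * b y ∂mu) * a x ∂mu := by
    intro a b
    congr 1; ext x
    rw [← integral_mul_const]
    congr 1; ext y; ring
  simp_rw [key]
  have hWg : ∀ b : ℝ → ℝ, Measurable b → (∀ x, |b x| ≤ 1) →
      Integrable (fun x => ∫ y, W x y * b y ∂mu) mu := by
    intro b hb hb1
    have : Integrable (fun z : ℝ × ℝ => Function.uncurry W z * b z.2) (mu.prod mu) :=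
      hW.mul_bdd (c := 1) (hb.comp measurable_snd).aestronglyMeasurable
        (Eventually.of_forall fun z => hb1 z.2)
    exact this.integral_prod_left
  have hT := fun n => hWg (g n) (hgm n) (hgb n)
  have hT0 := hWg g0 hg0m hg0b
  have hae := hW.prod_right_ae
  have hD : Tendsto (fun n => ∫ x, |(∫ y, W x y * g n y ∂mu) - ∫ y, W x y * g0 y ∂mu| ∂mu) atTop
      (nhds (∫ x, (0 : ℝ) ∂mu)) := by
    apply tendsto_integral_of_dominated_convergence
      (fun x => 2 * ∫ y, ‖Function.uncurry W (x, y)‖ ∂mu)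
    · intro n
      exact ((hT n).sub hT0).abs.aestronglyMeasurable
    · exact hW.integral_norm_prod_left.const_mul 2
    · intro n
      filter_upwards [hae] with x hx
      have hb : ∀ b : ℝ → ℝ, (∀ x, |b x| ≤ 1) →
          |∫ y, W x y * b y ∂mu| ≤ ∫ y, ‖Function.uncurry W (x, y)‖ ∂mu := by
        intro b hb
        rw [← Real.norm_eq_abs]
        refine norm_integral_le_of_norm_le hx.norm (Eventually.of_forall fun y => ?_)
        simp only [Function.uncurry, norm_mul, Real.norm_eq_abs]
        exact mul_le_of_le_one_right (abs_nonneg _) (hb y)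
      rw [Real.norm_eq_abs, abs_abs]
      have h1 := hb _ (hgb n)
      have h2 := hb _ hg0b
      refine (abs_sub _ _).trans ?_
      linarith
    · filter_upwards [hae] with x hx
      have := hg (fun y => W x y) hx
      have h2 := (this.sub_const (∫ y, W x y * g0 y ∂mu)).abs
      simpa using h2
  rw [integral_zero] at hD
  have hdiff : Tendsto (fun n => (∫ x, (∫ y, W x y * g n y ∂mu) * f n x ∂mu)
      - ∫ x, (∫ y, W x y * g0 y ∂mu) * f n x ∂mu) atTop (nhds 0) := by
    refine squeeze_zero_norm (fun n => ?_) hD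
    have i1 : ∀ h : ℝ → ℝ, Integrable h mu → Integrable (fun x => h x * f n x) mu := fun h hh =>
      hh.mul_bdd (c := 1) (hfm n).aestronglyMeasurable (Eventually.of_forall fun z => hfb n z)
    rw [← integral_sub (i1 _ (hT n)) (i1 _ hT0)]
    refine norm_integral_le_of_norm_le ((hT n).sub hT0).abs (Eventually.of_forall fun x => ?_)
    rw [← sub_mul, norm_mul]
    exact mul_le_of_le_one_right (norm_nonneg _) (hfb n x)
  have := hdiff.add (hf _ hT0)
  simpa using this

/-- Bilinear form of a kernel. -/
def Q (V : ℝ → ℝ → ℝ) (f g : ℝ → ℝ) : ℝ := ∫ x, ∫ y, V x y * f x * g y ∂mu ∂mu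

lemma Q_int {V : ℝ → ℝ → ℝ} (hV : Integrable (Function.uncurry V) (mu.prod mu)) {f g : ℝ → ℝ}
    (hf : Measurable f) (hg : Measurable g) (hfb : ∀ x, |f x| ≤ 1) (hgb : ∀ x, |g x| ≤ 1) :
    Integrable (fun z : ℝ × ℝ => V z.1 z.2 * f z.1 * g z.2) (mu.prod mu) := by
  have h1 := hV.mul_bdd (c := 1) (g := fun z : ℝ × ℝ => f z.1)
      (hf.comp measurable_fst).aestronglyMeasurable
        (Eventually.of_forall fun z => hfb z.1)
  exact h1.mul_bdd (c := 1) (g := fun z : ℝ × ℝ => g z.2)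
      (hg.comp measurable_snd).aestronglyMeasurable
        (Eventually.of_forall fun z => hgb z.2)

lemma Q_prod {V : ℝ → ℝ → ℝ} (hV : Integrable (Function.uncurry V) (mu.prod mu)) {f g : ℝ → ℝ}
    (hf : Measurable f) (hg : Measurable g) (hfb : ∀ x, |f x| ≤ 1) (hgb : ∀ x, |g x| ≤ 1) :
    Q V f g = ∫ z : ℝ × ℝ, V z.1 z.2 * f z.1 * g z.2 ∂(mu.prod mu) :=
  (integral_prod _ (Q_int hV hf hg hfb hgb)).symm

lemma Q_sub_le {V W : ℝ → ℝ → ℝ} (hV : Integrable (Function.uncurry V) (mu.prod mu))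
    (hW : Integrable (Function.uncurry W) (mu.prod mu)) {f g : ℝ → ℝ}
    (hf : Measurable f) (hg : Measurable g) (hfb : ∀ x, |f x| ≤ 1) (hgb : ∀ x, |g x| ≤ 1) :
    |Q V f g - Q W f g| ≤ cutNorm (fun x y => V x y - W x y) := by
  have hVW : Integrable (Function.uncurry (fun x y => V x y - W x y)) (mu.prod mu) := hV.sub hW
  have e : Q V f g - Q W f g = Q (fun x y => V x y - W x y) f g := by
    rw [Q_prod hV hf hg hfb hgb, Q_prod hW hf hg hfb hgb, Q_prod hVW hf hg hfb hgb,
      ← integral_sub (Q_int hV hf hg hfb hgb) (Q_int hW hf hg hfb hgb)]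
    congr 1; ext z; ring
  rw [e]
  apply le_csSup
  · refine ⟨∫ z, ‖Function.uncurry (fun x y => V x y - W x y) z‖ ∂(mu.prod mu), ?_⟩
    rintro r ⟨a, b, ha, hb, ha1, hb1, rfl⟩
    have ha2 : ∀ x, |a x| ≤ 1 := fun x => abs_le.2 (ha1 x)
    have hb2 : ∀ x, |b x| ≤ 1 := fun x => abs_le.2 (hb1 x)
    change |Q (fun x y => V x y - W x y) a b| ≤ _
    rw [Q_prod hVW ha hb ha2 hb2]
    rw [← Real.norm_eq_abs]
    refine norm_integral_le_of_norm_le hVW.norm (Eventually.of_forall fun z => ?_)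
    simp only [Function.uncurry, norm_mul]
    rw [mul_assoc]
    refine mul_le_of_le_one_right (norm_nonneg _) ?_
    exact mul_le_one₀ (ha2 _) (norm_nonneg _) (hb2 _)
  · exact ⟨f, g, hf, hg, fun x => abs_le.1 (hfb x), fun x => abs_le.1 (hgb x), rfl⟩

lemma stepIdx_meas (n : ℕ) : Measurable (stepIdx n) := by
  unfold stepIdx
  have h1 : Measurable (fun x : ℝ => ⌈(n : ℝ) * x⌉₊) :=
    Nat.measurable_ceil.comp (measurable_const_mul _)
  exact (measurable_of_countable (fun k : ℕ => k - 1)).comp h1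

lemma stepGraphon_int (n : ℕ) (A : Fin n → Fin n → ℝ) :
    Integrable (Function.uncurry (stepGraphon n A)) (mu.prod mu) := by
  let B : ℕ × ℕ → ℝ := fun z => if hx : z.1 < n then
    if hy : z.2 < n then A ⟨z.1, hx⟩ ⟨z.2, hy⟩ else 0
  else 0
  have hm : Measurable (Function.uncurry (stepGraphon n A)) := by
    have : Measurable (fun z : ℝ × ℝ => B (stepIdx n z.1, stepIdx n z.2)) :=
      (measurable_of_countable B).comp
        (((stepIdx_meas n).comp measurable_fst).prodMk ((stepIdx_meas n).comp measurable_snd))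
    exact this
  refine int_of_bdd hm (C := ∑ i, ∑ j, |A i j|) ?_
  rintro ⟨x, y⟩
  have h0 : 0 ≤ ∑ i, ∑ j, |A i j| :=
    Finset.sum_nonneg fun i _ => Finset.sum_nonneg fun j _ => abs_nonneg _
  simp only [Function.uncurry, stepGraphon]
  split_ifs with h1 h2
  · refine le_trans ?_ (Finset.single_le_sum (f := fun i => ∑ j, |A i j|)
      (fun i _ => Finset.sum_nonneg fun j _ => abs_nonneg _) (Finset.mem_univ (⟨stepIdx n x, h1⟩ : Fin n)))
    exact Finset.single_le_sum (f := fun j => |A ⟨stepIdx n x, h1⟩ j|)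
      (fun j _ => abs_nonneg _) (Finset.mem_univ (⟨stepIdx n y, h2⟩ : Fin n))
  · simpa using h0
  · simpa using h0

/-- the truncated moments -/
abbrev mom (ν : ℝ → Measure ℝ) (p : ℕ) : ℝ → ℝ := mf (fun t => clamp t ^ p) ν

lemma mom_meas {ν : ℝ → Measure ℝ} (hν : IsYoungMeasure ν) (p : ℕ) : Measurable (mom ν p) :=
  mf_meas hν (clamp_cont.pow p)

lemma mom_bound {ν : ℝ → Measure ℝ} (hν : IsYoungMeasure ν) (p : ℕ) (x : ℝ) : |mom ν p x| ≤ 1 :=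
  mf_bound hν (clamp_pow_le p) x

lemma ae_Icc (ν : YMb) : ∀ᵐ x ∂mu, ∀ᵐ t ∂(ν.1 x), t ∈ Set.Icc (-1 : ℝ) 1 := by
  filter_upwards [ν.2.2] with x hx
  have := ν.2.1.2 x
  exact (mem_ae_iff_prob_eq_one measurableSet_Icc).2 hx

lemma int_clamp {ν : ℝ → Measure ℝ} (hν : IsYoungMeasure ν) (x : ℝ) {f : ℝ → ℝ}
    (hf : Continuous f) : Integrable (fun t => f (clamp t)) (ν x) := by
  have := hν.2 x
  obtain ⟨C, hC⟩ := (isCompact_Icc (a := (-1 : ℝ)) (b := 1)).exists_bound_of_continuousOn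
    hf.continuousOn
  exact int_of_bdd (hf.comp clamp_cont).measurable (fun t => hC _ (clamp_mem t))

lemma dirichlet_eq (V : ℝ → ℝ → ℝ) (hV : Integrable (Function.uncurry V) (mu.prod mu)) (ν : YMb) :
    graphonDirichlet V ν.1 = Q V (mom ν.1 2) (fun _ => 1) - 2 * Q V (mom ν.1 1) (mom ν.1 1)
      + Q V (fun _ => 1) (mom ν.1 2) := by
  have hν := ν.2.1
  have o1 : Measurable (fun _ : ℝ => (1 : ℝ)) := measurable_const
  have o2 : ∀ x : ℝ, |(fun _ : ℝ => (1 : ℝ)) x| ≤ 1 := fun x => by simp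
  have i1 := Q_int hV (mom_meas hν 2) o1 (mom_bound hν 2) o2
  have i2 := Q_int hV (mom_meas hν 1) (mom_meas hν 1) (mom_bound hν 1) (mom_bound hν 1)
  have i3 := Q_int hV o1 (mom_meas hν 2) o2 (mom_bound hν 2)
  have i12 : Integrable (fun z : ℝ × ℝ => V z.1 z.2 * mom ν.1 2 z.1 * 1
      - 2 * (V z.1 z.2 * mom ν.1 1 z.1 * mom ν.1 1 z.2)) (mu.prod mu) := i1.sub (i2.const_mul 2)
  have i123 : Integrable (fun z : ℝ × ℝ => V z.1 z.2 * mom ν.1 2 z.1 * 1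
      - 2 * (V z.1 z.2 * mom ν.1 1 z.1 * mom ν.1 1 z.2) + V z.1 z.2 * 1 * mom ν.1 2 z.2)
      (mu.prod mu) := i12.add i3
  rw [Q_prod hV (mom_meas hν 2) o1 (mom_bound hν 2) o2,
    Q_prod hV (mom_meas hν 1) (mom_meas hν 1) (mom_bound hν 1) (mom_bound hν 1),
    Q_prod hV o1 (mom_meas hν 2) o2 (mom_bound hν 2), ← integral_const_mul,
    ← integral_sub i1 (i2.const_mul 2), ← integral_add i12 i3,
    integral_prod _ i123]
  unfold graphonDirichlet
  have hae := ae_Icc ν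
  refine integral_congr_ae ?_
  filter_upwards [hae] with x hx
  refine integral_congr_ae ?_
  filter_upwards [hae] with y hy
  have := hν.2 x
  have := hν.2 y
  have inner : ∀ t, ∫ s, |s - t| ^ 2 ∂(ν.1 x) = mom ν.1 2 x - 2 * t * mom ν.1 1 x + t ^ 2 := by
    intro t
    have e : ∫ s, |s - t| ^ 2 ∂(ν.1 x)
        = ∫ s, (clamp s ^ 2 - 2 * t * clamp s ^ 1 + t ^ 2) ∂(ν.1 x) := by
      refine integral_congr_ae ?_
      filter_upwards [hx] with s hs
      rw [clamp_eq hs, sq_abs]; ring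
    have j1 := int_clamp hν x (continuous_pow 2)
    have j2 := (int_clamp hν x (continuous_pow 1)).const_mul (2 * t)
    have j12 : Integrable (fun s => clamp s ^ 2 - 2 * t * clamp s ^ 1) (ν.1 x) := j1.sub j2
    rw [e, integral_add j12 (integrable_const _), integral_sub j1 j2, integral_const_mul]
    simp [mom, mf]
  simp_rw [inner]
  have e : ∫ t, (mom ν.1 2 x - 2 * t * mom ν.1 1 x + t ^ 2) ∂(ν.1 y)
      = ∫ t, (mom ν.1 2 x - 2 * mom ν.1 1 x * clamp t ^ 1 + clamp t ^ 2) ∂(ν.1 y) := by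
    refine integral_congr_ae ?_
    filter_upwards [hy] with s hs
    rw [clamp_eq hs]; ring
  have j1 := int_clamp hν y (continuous_pow 2)
  have j2 := (int_clamp hν y (continuous_pow 1)).const_mul (2 * mom ν.1 1 x)
  have e2 : ∫ t, (mom ν.1 2 x - 2 * t * mom ν.1 1 x + t ^ 2) ∂(ν.1 y)
      = mom ν.1 2 x - 2 * mom ν.1 1 x * mom ν.1 1 y + mom ν.1 2 y := by
    have j12 : Integrable (fun t => mom ν.1 2 x - 2 * mom ν.1 1 x * clamp t ^ 1) (ν.1 y) :=
      (integrable_const _).sub j2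
    rw [e, integral_add j12 j1, integral_sub (integrable_const _) j2,
      integral_const_mul]
    simp [mom, mf]
  rw [e2]
  ring

lemma phi_eq (ν : YMb) : ∫ x in I01, ∫ t, Phi t ∂(ν.1 x)
    = ∫ x in I01, 1 * ∫ t, Phi (clamp t) ∂(ν.1 x) := by
  refine integral_congr_ae ?_
  filter_upwards [ae_Icc ν] with x hx
  rw [one_mul]
  refine integral_congr_ae ?_
  filter_upwards [hx] with s hs
  rw [clamp_eq hs]

lemma Phi_cont : Continuous Phi := by unfold Phi; fun_prop

lemma GL_tendsto (ε : ℝ) (Wseq : ℕ → ℝ → ℝ → ℝ)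
    (hstep : ∀ n, Integrable (Function.uncurry (Wseq n)) (mu.prod mu))
    (W : ℝ → ℝ → ℝ)
    (hWint : Integrable (Function.uncurry W) (mu.prod mu))
    (hcut : Tendsto (fun n => cutNorm (fun x y => Wseq n x y - W x y)) atTop (nhds 0))
    (νs : ℕ → YMb) (ν : YMb) (h : NarrowConv (fun n => (νs n).1) ν.1) :
    Tendsto (fun n => graphonGL (Wseq n) ε (νs n).1) atTop (nhds (graphonGL W ε ν.1)) := by
  unfold graphonGL
  have hm : ∀ p : ℕ, ∀ k : ℝ → ℝ, Integrable k mu →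
      Tendsto (fun n => ∫ x, k x * mom (νs n).1 p x ∂mu) atTop
        (nhds (∫ x, k x * mom ν.1 p x ∂mu)) := fun p k hk =>
    h _ (clamp_cont.pow p) ⟨1, clamp_pow_le p⟩ k hk
  have hQ : ∀ (f g : ℕ → ℝ → ℝ) (f0 g0 : ℝ → ℝ)
    (hfm : ∀ n, Measurable (f n)) (hgm : ∀ n, Measurable (g n))
    (hfb : ∀ n x, |f n x| ≤ 1) (hgb : ∀ n x, |g n x| ≤ 1)
    (hg0m : Measurable g0) (hg0b : ∀ x, |g0 x| ≤ 1)
    (hf : ∀ h : ℝ → ℝ, Integrable h mu →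
      Tendsto (fun n => ∫ x, h x * f n x ∂mu) atTop (nhds (∫ x, h x * f0 x ∂mu)))
    (hg : ∀ h : ℝ → ℝ, Integrable h mu →
      Tendsto (fun n => ∫ x, h x * g n x ∂mu) atTop (nhds (∫ x, h x * g0 x ∂mu))),
    Tendsto (fun n => Q (Wseq n) (f n) (g n)) atTop (nhds (Q W f0 g0)) := by
    intro f g f0 g0 hfm hgm hfb hgb hg0m hg0b hf hg
    have h1 := weak_prod W hWint f g f0 g0 hfm hgm hfb hgb hg0m hg0b hf hg
    have h2 : Tendsto (fun n => Q (Wseq n) (f n) (g n) - Q W (f n) (g n)) atTop (nhds 0) :=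
      squeeze_zero_norm (fun n => Q_sub_le (hstep n) hWint (hfm n) (hgm n) (hfb n) (hgb n)) hcut
    have := h2.add h1
    simpa [Q] using this
  have o1 : Measurable (fun _ : ℝ => (1 : ℝ)) := measurable_const
  have o2 : ∀ x : ℝ, |(fun _ : ℝ => (1 : ℝ)) x| ≤ 1 := fun x => by simp
  have mm := fun p n => mom_meas (νs n).2.1 p
  have mb := fun p n => mom_bound (νs n).2.1 p
  have q1 := hQ (fun n => mom (νs n).1 2) (fun _ _ => 1) (mom ν.1 2) (fun _ => 1) (mm 2)
    (fun _ => o1) (mb 2) (fun _ => o2) o1 o2 (hm 2) (fun _ _ => tendsto_const_nhds)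
  have q2 := hQ (fun n => mom (νs n).1 1) (fun n => mom (νs n).1 1) (mom ν.1 1) (mom ν.1 1) (mm 1)
    (mm 1) (mb 1) (mb 1) (mom_meas ν.2.1 1) (mom_bound ν.2.1 1) (hm 1) (hm 1)
  have q3 := hQ (fun _ _ => 1) (fun n => mom (νs n).1 2) (fun _ => 1) (mom ν.1 2) (fun _ => o1)
    (mm 2) (fun _ => o2) (mb 2) (mom_meas ν.2.1 2) (mom_bound ν.2.1 2)
    (fun _ _ => tendsto_const_nhds) (hm 2)
  have hphi := h (fun t => Phi (clamp t)) (Phi_cont.comp clamp_cont) (by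
    obtain ⟨C, hC⟩ := (isCompact_Icc (a := (-1 : ℝ)) (b := 1)).exists_bound_of_continuousOn
      Phi_cont.continuousOn
    exact ⟨C, fun t => hC _ (clamp_mem t)⟩) (fun _ => 1) (integrable_const (1 : ℝ))
  rw [dirichlet_eq W hWint ν, phi_eq]
  have e : ∀ n, graphonDirichlet (Wseq n) (νs n).1 = _ := fun n =>
    dirichlet_eq (Wseq n) (hstep n) (νs n)
  simp_rw [e, phi_eq]
  exact ((q1.sub (q2.const_mul 2)).add q3).add (hphi.const_mul _)

lemma graphGLFn_eq (n : ℕ) (Wn : ℝ → ℝ → ℝ) (ε : ℝ) (ν : ℝ → Measure ℝ)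
    (h : ∃ u : ℝ → ℝ, IsStepFun n u ∧ Measurable u ∧
      (∀ x, u x ∈ Set.Icc (-1 : ℝ) 1) ∧ ν = deltaYM u) :
    graphGLFn n Wn ε ν = ((graphonGL Wn ε ν : ℝ) : EReal) := by
  unfold graphGLFn
  rw [dif_pos h]
  have hu := h.choose_spec.2.2.2
  generalize h.choose = u at hu
  subst hu
  simp only [graphonGL, graphonDirichlet, deltaYM, integral_dirac]

lemma graphGLFn_ge (n : ℕ) (Wn : ℝ → ℝ → ℝ) (ε : ℝ) (ν : ℝ → Measure ℝ) :
    ((graphonGL Wn ε ν : ℝ) : EReal) ≤ graphGLFn n Wn ε ν := by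
  by_cases h : ∃ u : ℝ → ℝ, IsStepFun n u ∧ Measurable u ∧
      (∀ x, u x ∈ Set.Icc (-1 : ℝ) 1) ∧ ν = deltaYM u
  · rw [graphGLFn_eq n Wn ε ν h]
  · unfold graphGLFn
    rw [dif_neg h]; exact le_top

lemma greedy (n : ℕ) (δ : ℝ) (D : ℕ → ℕ → ℝ → ℝ)
    (hD : ∀ i p, ∀ u ∈ Set.Icc (-1 : ℝ) 1, |D i p u| ≤ δ)
    (hneg : ∀ i, ∀ c : ℕ → ℝ, ∃ u ∈ Set.Icc (-1 : ℝ) 1,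
      ∑ p ∈ Finset.range n, c p * D i p u ≤ 0) :
    ∃ u : ℕ → ℝ, (∀ i, u i ∈ Set.Icc (-1 : ℝ) 1) ∧ ∀ k : ℕ,
      ∑ p ∈ Finset.range n, (1 / (2 : ℝ)) ^ p * (∑ i ∈ Finset.range k, D i p (u i)) ^ 2
        ≤ k * (2 * δ ^ 2) := by
  choose U hU1 hU2 using hneg
  let w : ℕ → ℝ := fun p => (1 / (2 : ℝ)) ^ p
  let S : ℕ → ℕ → ℝ := fun k => Nat.rec (fun _ => 0)
    (fun k s p => s p + D k p (U k (fun p => w p * s p))) k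
  let u : ℕ → ℝ := fun k => U k (fun p => w p * S k p)
  have hu : ∀ i, u i ∈ Set.Icc (-1 : ℝ) 1 := fun i => hU1 _ _
  have hS : ∀ k p, S (k + 1) p = S k p + D k p (u k) := fun k p => rfl
  have hS2 : ∀ k p, S k p = ∑ i ∈ Finset.range k, D i p (u i) := by
    intro k p
    induction k with
    | zero => simp [S]
    | succ k ih => rw [hS, ih, Finset.sum_range_succ]
  refine ⟨u, hu, fun k => ?_⟩
  simp_rw [← hS2]
  induction k with
  | zero => simp [S]
  | succ k ih =>
    have h1 : ∑ p ∈ Finset.range n, (w p * S k p) * D k p (u k) ≤ 0 :=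
      hU2 k (fun p => w p * S k p)
    have h2 : ∑ p ∈ Finset.range n, w p * (D k p (u k)) ^ 2 ≤ 2 * δ ^ 2 := by
      calc ∑ p ∈ Finset.range n, w p * (D k p (u k)) ^ 2
          ≤ ∑ p ∈ Finset.range n, w p * δ ^ 2 := by
            refine Finset.sum_le_sum fun p _ => ?_
            have hw : 0 ≤ w p := by positivity
            refine mul_le_mul_of_nonneg_left ?_ hw
            rw [← sq_abs]
            exact pow_le_pow_left₀ (abs_nonneg _) (hD k p _ (hu k)) 2
        _ = (∑ p ∈ Finset.range n, w p) * δ ^ 2 := by rw [Finset.sum_mul]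
        _ ≤ 2 * δ ^ 2 := mul_le_mul_of_nonneg_right (sum_geometric_two_le n) (sq_nonneg _)
    have h3 : ∑ p ∈ Finset.range n, (1 / (2 : ℝ)) ^ p * S (k + 1) p ^ 2
        = ∑ p ∈ Finset.range n, (1 / (2 : ℝ)) ^ p * S k p ^ 2
          + 2 * ∑ p ∈ Finset.range n, (w p * S k p) * D k p (u k)
          + ∑ p ∈ Finset.range n, w p * (D k p (u k)) ^ 2 := by
      rw [Finset.mul_sum, ← Finset.sum_add_distrib, ← Finset.sum_add_distrib]
      refine Finset.sum_congr rfl fun p _ => ?_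
      rw [hS]; ring
    rw [h3]
    push_cast
    linarith

lemma stepIdx_eq (n i : ℕ) (hn : 0 < n) (x : ℝ)
    (hx : x ∈ Set.Ioc ((i : ℝ) / n) (((i : ℝ) + 1) / n)) : stepIdx n x = i := by
  have hn' : (0 : ℝ) < n := by exact_mod_cast hn
  have h1 := (div_lt_iff₀ hn').1 hx.1
  have h2 := (le_div_iff₀ hn').1 hx.2
  have : ⌈(n : ℝ) * x⌉₊ = i + 1 := by
    rw [Nat.ceil_eq_iff (by omega)]
    push_cast
    constructor
    · have : ((i + 1 - 1 : ℕ) : ℝ) = i := by simp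
      linarith
    · linarith
  simp [stepIdx, this]

lemma exists_step (ν : ℝ → Measure ℝ) (hν : IsYoungMeasure ν) (n : ℕ) (hn : 0 < n) :
    ∃ u : ℝ → ℝ, IsStepFun n u ∧ Measurable u ∧ (∀ x, u x ∈ Set.Icc (-1 : ℝ) 1) ∧
      ∀ p < n, ∀ t ∈ Set.Icc (0 : ℝ) 1,
        |∫ x in (0 : ℝ)..t, (u x ^ p - mom ν p x)| ≤ Real.sqrt (2 ^ p * (8 / n)) + 2 / n := by
  have hn' : (0 : ℝ) < n := by exact_mod_cast hn
  have hmi : ∀ p (a b : ℝ), IntervalIntegrable (mom ν p) volume a b := fun p a b =>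
    ⟨int_of_bdd (mom_meas hν p) (mom_bound hν p), int_of_bdd (mom_meas hν p) (mom_bound hν p)⟩
  let M : ℕ → ℕ → ℝ := fun i p => ∫ x in ((i : ℝ) / n)..(((i : ℝ) + 1) / n), mom ν p x
  have hlen : ∀ i : ℕ, ((i : ℝ) + 1) / n - (i : ℝ) / n = 1 / n := fun i => by ring
  have hle : ∀ i : ℕ, (i : ℝ) / n ≤ ((i : ℝ) + 1) / n := fun i => by gcongr; linarith
  obtain ⟨u, hu, hS⟩ := greedy n (2 / n) (fun i p s => (1 / n) * s ^ p - M i p) (by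
    intro i p s hs
    have h1 : |M i p| ≤ 1 / n := by
      have := intervalIntegral.norm_integral_le_of_norm_le_const (a := (i : ℝ) / n)
        (b := ((i : ℝ) + 1) / n) (f := mom ν p) (C := 1) (fun x _ => mom_bound hν p x)
      rw [hlen, one_mul, abs_of_nonneg (by positivity)] at this
      exact this
    have h2 : |(1 / n) * s ^ p| ≤ 1 / n := by
      rw [abs_mul, abs_of_nonneg (by positivity : (0 : ℝ) ≤ 1 / n)]
      exact mul_le_of_le_one_right (by positivity) (abs_pow_le_one' hs p)
    refine (abs_sub _ _).trans ?_
    have : (2 : ℝ) / n = 1 / n + 1 / n := by ring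
    linarith) (by
    intro i c
    let q : ℝ → ℝ := fun s => ∑ p ∈ Finset.range n, c p * s ^ p
    have hq : Continuous q := by fun_prop
    obtain ⟨s, hs, hmin⟩ := (isCompact_Icc (a := (-1 : ℝ)) (b := 1)).exists_isMinOn
      ⟨0, by norm_num, by norm_num⟩ hq.continuousOn
    refine ⟨s, hs, ?_⟩
    have hx : ∀ x, q s ≤ ∑ p ∈ Finset.range n, c p * mom ν p x := by
      intro x
      have := hν.2 x
      have e : ∑ p ∈ Finset.range n, c p * mom ν p x = ∫ t, q (clamp t) ∂(ν x) := by
        simp only [q]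
        rw [integral_finsetSum _ (fun p _ => (int_clamp hν x (continuous_pow p)).const_mul (c p))]
        refine Finset.sum_congr rfl fun p _ => ?_
        rw [integral_const_mul]; rfl
      rw [e]
      have : ∫ t, q s ∂(ν x) ≤ ∫ t, q (clamp t) ∂(ν x) :=
        integral_mono (integrable_const _) (int_clamp hν x hq) (fun t => hmin (clamp_mem t))
      simpa using this
    have hi : ∑ p ∈ Finset.range n, c p * M i p
        = ∫ x in ((i : ℝ) / n)..(((i : ℝ) + 1) / n), ∑ p ∈ Finset.range n, c p * mom ν p x := by
      rw [intervalIntegral.integral_finsetSum (fun p _ => (hmi p _ _).const_mul (c p))]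
      refine Finset.sum_congr rfl fun p _ => ?_
      rw [intervalIntegral.integral_const_mul]
    have hge : (1 / n) * q s ≤ ∑ p ∈ Finset.range n, c p * M i p := by
      have := intervalIntegral.integral_mono_on (hle i) (μ := volume) (f := fun _ => q s)
        (g := fun x => ∑ p ∈ Finset.range n, c p * mom ν p x) (by simp)
        (by
          have h0 := IntervalIntegrable.sum (Finset.range n)
            (fun p _ => (hmi p ((i : ℝ) / n) (((i : ℝ) + 1) / n)).const_mul (c p))
          have he : (fun x => ∑ p ∈ Finset.range n, c p * mom ν p x)
              = ∑ p ∈ Finset.range n, fun x => c p * mom ν p x := by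
            ext x; simp
          rw [he]; exact h0)
        (fun x _ => hx x)
      rw [intervalIntegral.integral_const, hlen, smul_eq_mul] at this
      rw [hi]; exact this
    have : ∑ p ∈ Finset.range n, c p * ((1 / n) * s ^ p - M i p)
        = (1 / n) * q s - ∑ p ∈ Finset.range n, c p * M i p := by
      simp only [q]
      rw [Finset.mul_sum, ← Finset.sum_sub_distrib]
      refine Finset.sum_congr rfl fun p _ => ?_
      ring
    rw [this]; linarith)
  have hum : Measurable (fun x => u (stepIdx n x)) :=
    (measurable_of_countable u).comp (stepIdx_meas n)
  refine ⟨fun x => u (stepIdx n x), ?_, hum, fun x => hu _, ?_⟩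
  · intro i x hx y hy
    beta_reduce
    rw [stepIdx_eq n i hn x hx, stepIdx_eq n i hn y hy]
  intro p hp t ht
  have ham : Measurable (fun x => u (stepIdx n x) ^ p - mom ν p x) :=
    (hum.pow_const p).sub (mom_meas hν p)
  have hab : ∀ x, |u (stepIdx n x) ^ p - mom ν p x| ≤ 2 := by
    intro x
    refine (abs_sub _ _).trans ?_
    have h1 := abs_pow_le_one' (hu (stepIdx n x)) p
    have h2 := mom_bound hν p x
    linarith
  have hai : ∀ (a b : ℝ), IntervalIntegrable (fun x => u (stepIdx n x) ^ p - mom ν p x)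
      volume a b := fun a b => ⟨int_of_bdd ham hab, int_of_bdd ham hab⟩
  have hpiece : ∀ i : ℕ, ∫ x in ((i : ℝ) / n)..(((i : ℝ) + 1) / n),
      (u (stepIdx n x) ^ p - mom ν p x) = (1 / n) * u i ^ p - M i p := by
    intro i
    have hc : ∫ x in ((i : ℝ) / n)..(((i : ℝ) + 1) / n), (u (stepIdx n x) ^ p - mom ν p x)
        = ∫ x in ((i : ℝ) / n)..(((i : ℝ) + 1) / n), (u i ^ p - mom ν p x) := by
      refine intervalIntegral.integral_congr_ae (Eventually.of_forall fun x hx => ?_)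
      rw [Set.uIoc_of_le (hle i)] at hx
      rw [stepIdx_eq n i hn x hx]
    rw [hc, intervalIntegral.integral_sub (by simp) (hmi p _ _), intervalIntegral.integral_const,
      hlen, smul_eq_mul]
  have hsum : ∀ k : ℕ, ∫ x in (0 : ℝ)..((k : ℝ) / n), (u (stepIdx n x) ^ p - mom ν p x)
      = ∑ i ∈ Finset.range k, ((1 / n) * u i ^ p - M i p) := by
    intro k
    have := intervalIntegral.sum_integral_adjacent_intervals (μ := volume)
      (f := fun x => u (stepIdx n x) ^ p - mom ν p x) (a := fun k : ℕ => (k : ℝ) / n) (n := k)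
      (fun i _ => hai _ _)
    simp only [Nat.cast_zero, zero_div] at this
    rw [← this]
    refine Finset.sum_congr rfl fun i _ => ?_
    rw [← hpiece]; push_cast; rfl
  let k := ⌊(n : ℝ) * t⌋₊
  have hk0 : 0 ≤ (n : ℝ) * t := mul_nonneg hn'.le ht.1
  have hk1 : (k : ℝ) ≤ n * t := Nat.floor_le hk0
  have hk2 : (n : ℝ) * t < k + 1 := Nat.lt_floor_add_one _
  have hkn : (k : ℝ) ≤ n := hk1.trans (mul_le_of_le_one_right hn'.le ht.2)
  rw [← intervalIntegral.integral_add_adjacent_intervals (hai 0 ((k : ℝ) / n)) (hai _ t), hsum]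
  refine (abs_add_le _ _).trans (add_le_add ?_ ?_)
  · refine Real.le_sqrt_of_sq_le ?_
    rw [sq_abs]
    have h1 := hS k
    have h2 := (Finset.single_le_sum (f := fun p => (1 / (2 : ℝ)) ^ p *
      (∑ i ∈ Finset.range k, ((1 / n) * u i ^ p - M i p)) ^ 2)
      (fun p _ => by positivity) (Finset.mem_range.2 hp)).trans h1
    have h3 : (k : ℝ) * (2 * (2 / n) ^ 2) ≤ 8 / n := by
      calc (k : ℝ) * (2 * (2 / n) ^ 2) ≤ (n : ℝ) * (2 * (2 / n) ^ 2) := by gcongr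
        _ = 8 / (n : ℝ) := by field_simp; norm_num
    have h4 := h2.trans h3
    rw [one_div, inv_pow, inv_mul_le_iff₀ (by positivity)] at h4
    exact h4
  · have := intervalIntegral.norm_integral_le_of_norm_le_const (a := (k : ℝ) / n)
        (b := t) (f := fun x => u (stepIdx n x) ^ p - mom ν p x) (C := 2) (fun x _ => hab x)
    refine this.trans ?_
    have h1 : 0 ≤ t - k / n := by
      rw [sub_nonneg, div_le_iff₀ hn']; linarith
    have h2 : t - k / n ≤ 1 / n := by
      rw [sub_le_iff_le_add, ← add_div, le_div_iff₀ hn']; linarith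
    rw [abs_of_nonneg h1]
    calc 2 * (t - k / n) ≤ 2 * (1 / n) := by gcongr
      _ = 2 / n := by ring

lemma weak_of_interval (a : ℕ → ℝ → ℝ) (ham : ∀ n, Measurable (a n)) (hab : ∀ n x, |a n x| ≤ 2)
    (h : ∀ t ∈ Set.Icc (0 : ℝ) 1, Tendsto (fun n => ∫ x in (0 : ℝ)..t, a n x) atTop (nhds 0))
    (g : ℝ → ℝ) (hg : Integrable g mu) :
    Tendsto (fun n => ∫ x, g x * a n x ∂mu) atTop (nhds 0) := by
  have hai : ∀ n, Integrable (a n) mu := fun n => int_of_bdd (ham n) (hab n)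
  have hIic : ∀ t : ℝ, Tendsto (fun n => ∫ x in Set.Iic t, a n x ∂mu) atTop (nhds 0) := by
    intro t
    let s := max 0 (min t 1)
    have hs0 : 0 ≤ s := le_max_left _ _
    have hs1 : s ≤ 1 := max_le zero_le_one (min_le_right _ _)
    have e : ∀ n, ∫ x in Set.Iic t, a n x ∂mu = ∫ x in (0 : ℝ)..s, a n x := by
      intro n
      rw [intervalIntegral.integral_of_le hs0, Measure.restrict_restrict measurableSet_Iic]
      refine setIntegral_congr_set ?_
      have h1 : (Set.Iic t ∩ Set.Ioc 0 1 : Set ℝ) = Set.Ioc 0 s := by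
        ext x
        simp only [Set.mem_inter_iff, Set.mem_Iic, Set.mem_Ioc, s, le_max_iff, le_min_iff]
        constructor
        · rintro ⟨h1, h2, h3⟩; exact ⟨h2, Or.inr ⟨h1, h3⟩⟩
        · rintro ⟨h1, h2⟩
          rcases h2 with h2 | h2
          · linarith
          · exact ⟨h2.1, h1, h2.2⟩
      rw [← h1]
      exact (ae_eq_refl _).inter Ioo_ae_eq_Ioc
    simp_rw [e]
    exact h s ⟨hs0, hs1⟩
  have huniv : Tendsto (fun n => ∫ x, a n x ∂mu) atTop (nhds 0) := by
    have := hIic 1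
    have e : ∀ n, ∫ x in Set.Iic 1, a n x ∂mu = ∫ x, a n x ∂mu := by
      intro n
      rw [Measure.restrict_restrict measurableSet_Iic]
      congr 2
      rw [Set.inter_eq_right]
      intro x hx; exact hx.2.le
    simpa only [e] using this
  have hset : ∀ s : Set ℝ, MeasurableSet s →
      Tendsto (fun n => ∫ x in s, a n x ∂mu) atTop (nhds 0) := by
    refine MeasurableSpace.induction_on_inter
      (C := fun s _ => Tendsto (fun n => ∫ x in s, a n x ∂mu) atTop (nhds 0))
      (s := Set.range Set.Iic) ?_ isPiSystem_Iic ?_ ?_ ?_ ?_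
    · rw [← borel_eq_generateFrom_Iic]; exact BorelSpace.measurable_eq
    · simp
    · rintro _ ⟨t, rfl⟩; exact hIic t
    · intro s hs hC
      have e : ∀ n, ∫ x in sᶜ, a n x ∂mu = ∫ x, a n x ∂mu - ∫ x in s, a n x ∂mu := fun n => by
        rw [← integral_add_compl hs (hai n)]; ring
      simp_rw [e]
      simpa using huniv.sub hC
    · intro f hd hfm hC
      have e : ∀ n, ∫ x in ⋃ i, f i, a n x ∂mu = ∑' i, ∫ x in f i, a n x ∂mu := fun n =>
        integral_iUnion hfm hd (hai n).integrableOn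
      simp_rw [e]
      have hsum : Summable (fun i => 2 * (mu.real (f i))) := by
        refine Summable.mul_left 2 ?_
        refine ENNReal.summable_toReal ?_
        rw [← measure_iUnion hd hfm]
        exact measure_ne_top _ _
      have := tendsto_tsum_of_dominated_convergence (f := fun n i => ∫ x in f i, a n x ∂mu)
        (g := fun _ => (0 : ℝ)) (𝓕 := atTop) hsum hC (Eventually.of_forall fun n i => by
          exact norm_setIntegral_le_of_norm_le_const (measure_lt_top _ _) (fun x _ => hab n x))
      simpa using this
  have hgi : ∀ (g : ℝ → ℝ), Integrable g mu → ∀ n, Integrable (fun x => g x * a n x) mu :=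
    fun g hg n => hg.mul_bdd (c := 2) (ham n).aestronglyMeasurable (Eventually.of_forall (hab n))
  refine Integrable.induction
    (fun g => Tendsto (fun n => ∫ x, g x * a n x ∂mu) atTop (nhds 0)) ?_ ?_ ?_ ?_ hg
  · intro c s hs _
    have e : ∀ n, ∫ x, s.indicator (fun _ => c) x * a n x ∂mu = c * ∫ x in s, a n x ∂mu := by
      intro n
      rw [← integral_const_mul, ← integral_indicator hs]
      congr 1; ext x
      by_cases hx : x ∈ s <;> simp [hx]
    simp_rw [e]
    simpa using (hset s hs).const_mul c
  · intro f g _ hf hg h1 h2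
    have e : ∀ n, ∫ x, (f + g) x * a n x ∂mu = ∫ x, f x * a n x ∂mu + ∫ x, g x * a n x ∂mu := by
      intro n
      rw [← integral_add (hgi f hf n) (hgi g hg n)]
      congr 1; ext x; simp [add_mul]
    simp_rw [e]
    simpa using h1.add h2
  · refine isClosed_of_closure_subset fun f hf => ?_
    rw [Metric.mem_closure_iff] at hf
    simp only [Set.mem_ofPred_eq]
    rw [Metric.tendsto_atTop]
    intro η hη
    obtain ⟨b, hb, hfb⟩ := hf (η / 4) (by positivity)
    simp only [Set.mem_ofPred_eq] at hb
    rw [Metric.tendsto_atTop] at hb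
    obtain ⟨N, hN⟩ := hb (η / 2) (by positivity)
    refine ⟨N, fun n hn => ?_⟩
    have h1 := hN n hn
    rw [Real.dist_eq, sub_zero] at h1 ⊢
    rw [L1.dist_eq_integral_dist] at hfb
    have fi := L1.integrable_coeFn f
    have bi := L1.integrable_coeFn b
    have h2 : |∫ x, f x * a n x ∂mu - ∫ x, b x * a n x ∂mu| ≤ ∫ x, 2 * dist (f x) (b x) ∂mu := by
      rw [← integral_sub (hgi _ fi n) (hgi _ bi n), ← Real.norm_eq_abs]
      refine norm_integral_le_of_norm_le ?_ (Eventually.of_forall fun x => ?_)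
      · exact ((fi.sub bi).norm.const_mul 2).congr (Eventually.of_forall fun x => by
          simp [Real.dist_eq])
      · rw [← sub_mul, norm_mul, Real.dist_eq, Real.norm_eq_abs, Real.norm_eq_abs, mul_comm]
        exact mul_le_mul_of_nonneg_right (hab n x) (abs_nonneg _)
    rw [integral_const_mul] at h2
    have h3 := abs_sub_abs_le_abs_sub (∫ x, f x * a n x ∂mu) (∫ x, b x * a n x ∂mu)
    linarith
  · intro f g hfg _ hf
    refine hf.congr fun n => integral_congr_ae ?_
    filter_upwards [hfg] with x hx
    rw [hx]

lemma recovery (ν : YMb) : ∃ u : ℕ → ℝ → ℝ, (∀ n, IsStepFun n (u n)) ∧ (∀ n, Measurable (u n)) ∧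
    (∀ n x, u n x ∈ Set.Icc (-1 : ℝ) 1) ∧ NarrowConv (fun n => deltaYM (u n)) ν.1 := by
  have hν := ν.2.1
  have hex : ∀ n : ℕ, ∃ u : ℝ → ℝ, IsStepFun n u ∧ Measurable u ∧
      (∀ x, u x ∈ Set.Icc (-1 : ℝ) 1) ∧ ∀ p < n, ∀ t ∈ Set.Icc (0 : ℝ) 1,
        |∫ x in (0 : ℝ)..t, (u x ^ p - mom ν.1 p x)| ≤ Real.sqrt (2 ^ p * (8 / n)) + 2 / n := by
    intro n
    rcases Nat.eq_zero_or_pos n with rfl | hn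
    · exact ⟨fun _ => 0, fun i => i.elim0, measurable_const, fun x => by norm_num,
        fun p hp => absurd hp (by omega)⟩
    · exact exists_step ν.1 hν n hn
  choose u hu1 hu2 hu3 hu4 using hex
  refine ⟨u, hu1, hu2, hu3, ?_⟩
  have hpow : ∀ p : ℕ, ∀ g : ℝ → ℝ, Integrable g mu →
      Tendsto (fun n => ∫ x, g x * (u n x ^ p - mom ν.1 p x) ∂mu) atTop (nhds 0) := by
    intro p g hg
    refine weak_of_interval (fun n x => u n x ^ p - mom ν.1 p x)
      (fun n => ((hu2 n).pow_const p).sub (mom_meas hν p)) (fun n x => ?_) (fun t ht => ?_) g hg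
    · refine (abs_sub _ _).trans ?_
      have h1 := abs_pow_le_one' (hu3 n x) p
      have h2 := mom_bound hν p x
      linarith
    · have hlim : Tendsto (fun n : ℕ => Real.sqrt (2 ^ p * (8 / (n : ℝ))) + 2 / (n : ℝ)) atTop
          (nhds 0) := by
        have h8 := (tendsto_const_div_atTop_nhds_zero_nat (8 : ℝ)).const_mul ((2 : ℝ) ^ p)
        have h2 := tendsto_const_div_atTop_nhds_zero_nat (2 : ℝ)
        have := (h8.sqrt).add h2
        simpa using this
      refine squeeze_zero_norm' ?_ hlim
      filter_upwards [eventually_gt_atTop p] with n hn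
      exact hu4 n p hn t ht
  intro f hf _ g hg
  -- uniform bounds on `[-1,1]`
  have hgi : ∀ (q : ℝ → ℝ) (C : ℝ), Measurable q → (∀ x, |q x| ≤ C) →
      Integrable (fun x => g x * q x) mu :=
    fun q C hq hC => hg.mul_bdd (c := C) hq.aestronglyMeasurable (Eventually.of_forall hC)
  have hbd : ∀ φ : ℝ → ℝ, Continuous φ → ∃ C, ∀ t ∈ Set.Icc (-1 : ℝ) 1, |φ t| ≤ C := fun φ hφ =>
    (isCompact_Icc (a := (-1 : ℝ)) (b := 1)).exists_bound_of_continuousOn hφ.continuousOn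
  have hi1 : ∀ (φ : ℝ → ℝ), Continuous φ → ∀ n, Integrable (fun x => g x * φ (u n x)) mu := by
    intro φ hφ n
    obtain ⟨C, hC⟩ := hbd φ hφ
    exact hgi _ C (hφ.measurable.comp (hu2 n)) (fun x => hC _ (hu3 n x))
  have hi2 : ∀ (φ : ℝ → ℝ), Continuous φ →
      Integrable (fun x => g x * mf (fun t => φ (clamp t)) ν.1 x) mu := by
    intro φ hφ
    obtain ⟨C, hC⟩ := hbd φ hφ
    exact hgi _ C (mf_meas hν (hφ.comp clamp_cont))
      (mf_bound hν (fun t => hC _ (clamp_mem t)))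
  have hpoly : ∀ P : Polynomial ℝ, Tendsto (fun n => ∫ x, g x * (P.eval (u n x)
      - mf (fun t => P.eval (clamp t)) ν.1 x) ∂mu) atTop (nhds 0) := by
    intro P
    have e : ∀ n, ∫ x, g x * (P.eval (u n x) - mf (fun t => P.eval (clamp t)) ν.1 x) ∂mu
        = ∑ p ∈ Finset.range (P.natDegree + 1),
          P.coeff p * ∫ x, g x * (u n x ^ p - mom ν.1 p x) ∂mu := by
      intro n
      simp_rw [← integral_const_mul]
      rw [← integral_finsetSum]
      · congr 1; ext x
        have : mf (fun t => P.eval (clamp t)) ν.1 x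
            = ∑ p ∈ Finset.range (P.natDegree + 1), P.coeff p * mom ν.1 p x := by
          simp only [mf, Polynomial.eval_eq_sum_range]
          rw [integral_finsetSum _
            (fun p _ => (int_clamp hν x (continuous_pow p)).const_mul (P.coeff p))]
          refine Finset.sum_congr rfl fun p _ => ?_
          rw [integral_const_mul]
        rw [this, Polynomial.eval_eq_sum_range, ← Finset.sum_sub_distrib, Finset.mul_sum]
        refine Finset.sum_congr rfl fun p _ => ?_
        ring
      · intro p _
        refine Integrable.const_mul ?_ _
        have := (hi1 _ (continuous_pow p) n).sub (hi2 _ (continuous_pow p))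
        refine this.congr (Eventually.of_forall fun x => ?_)
        simp only [Pi.sub_apply]; ring
    simp_rw [e]
    have := tendsto_finsetSum (Finset.range (P.natDegree + 1))
      (fun p _ => (hpow p g hg).const_mul (P.coeff p))
    simpa using this
  have hdiff : Tendsto (fun n => ∫ x, g x * (f (u n x)
      - mf (fun t => f (clamp t)) ν.1 x) ∂mu) atTop (nhds 0) := by
    rw [Metric.tendsto_atTop]
    intro η hη
    let G := ∫ x, |g x| ∂mu
    have hG : 0 ≤ G := integral_nonneg fun x => abs_nonneg _
    let δ := η / (4 * (G + 1))
    have hδ : 0 < δ := by positivity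
    obtain ⟨P, hP⟩ := exists_polynomial_near_of_continuousOn (-1) 1 f hf.continuousOn δ hδ
    obtain ⟨N, hN⟩ := (Metric.tendsto_atTop.1 (hpoly P)) (η / 2) (by positivity)
    refine ⟨N, fun n hn => ?_⟩
    have h1 := hN n hn
    rw [Real.dist_eq, sub_zero] at h1 ⊢
    have hPc : Continuous (fun t => P.eval t) := P.continuous
    have k1 : ∀ φ : ℝ → ℝ, Continuous φ → Integrable
        (fun x => g x * (φ (u n x) - mf (fun t => φ (clamp t)) ν.1 x)) mu := by
      intro φ hφ
      refine ((hi1 φ hφ n).sub (hi2 φ hφ)).congr (Eventually.of_forall fun x => ?_)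
      simp only [Pi.sub_apply]; ring
    have h2 : |∫ x, g x * (f (u n x) - mf (fun t => f (clamp t)) ν.1 x) ∂mu
        - ∫ x, g x * (P.eval (u n x) - mf (fun t => P.eval (clamp t)) ν.1 x) ∂mu|
        ≤ ∫ x, |g x| * (2 * δ) ∂mu := by
      rw [← integral_sub (k1 f hf) (k1 _ hPc), ← Real.norm_eq_abs]
      refine norm_integral_le_of_norm_le (hg.abs.mul_const _) (Eventually.of_forall fun x => ?_)
      rw [← mul_sub, norm_mul, Real.norm_eq_abs, Real.norm_eq_abs]
      refine mul_le_mul_of_nonneg_left ?_ (abs_nonneg _)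
      have a1 := (hP _ (hu3 n x)).le
      have a2 : |mf (fun t => P.eval (clamp t)) ν.1 x - mf (fun t => f (clamp t)) ν.1 x| ≤ δ := by
        have e : mf (fun t => P.eval (clamp t)) ν.1 x - mf (fun t => f (clamp t)) ν.1 x
            = mf (fun t => P.eval (clamp t) - f (clamp t)) ν.1 x :=
          (integral_sub (int_clamp hν x hPc) (int_clamp hν x hf)).symm
        rw [e]
        exact mf_bound hν (fun t => (hP _ (clamp_mem t)).le) x
      rw [abs_le] at a1 a2 ⊢
      constructor <;> linarith [a1.1, a1.2, a2.1, a2.2]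
    rw [integral_mul_const] at h2
    have h3 := abs_sub_abs_le_abs_sub
      (∫ x, g x * (f (u n x) - mf (fun t => f (clamp t)) ν.1 x) ∂mu)
      (∫ x, g x * (P.eval (u n x) - mf (fun t => P.eval (clamp t)) ν.1 x) ∂mu)
    have h4 : G * (2 * δ) < η / 2 := by
      have : (G + 1) * (2 * δ) = η / 2 := by
        simp only [δ]; field_simp; norm_num
      nlinarith
    change _ ≤ G * (2 * δ) at h2
    linarith
  have elim : ∫ x in I01, g x * ∫ t, f t ∂(ν.1 x)
      = ∫ x, g x * mf (fun t => f (clamp t)) ν.1 x ∂mu := by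
    refine integral_congr_ae ?_
    filter_upwards [ae_Icc ν] with x hx
    congr 1
    refine integral_congr_ae ?_
    filter_upwards [hx] with s hs
    rw [clamp_eq hs]
  rw [elim]
  have := hdiff.add_const (∫ x, g x * mf (fun t => f (clamp t)) ν.1 x ∂mu)
  rw [zero_add] at this
  refine this.congr fun n => ?_
  simp only [deltaYM, integral_dirac]
  rw [← integral_add _ (hi2 f hf)]
  · congr 1; ext x; ring
  · refine ((hi1 f hf n).sub (hi2 f hf)).congr (Eventually.of_forall fun x => ?_)
    simp only [Pi.sub_apply]; ring

/-- Γ-convergence of the graph Ginzburg–Landau functionals to the graphon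
Ginzburg–Landau functional. -/
theorem graphGL_gammaConv_graphonGL
    (ε : ℝ) (hε : 0 < ε)
    (Wseq : ℕ → ℝ → ℝ → ℝ)
    (hstep : ∀ n, ∃ A : Fin n → Fin n → ℝ, (∀ i j, A i j = A j i) ∧
      (∀ i j, 0 ≤ A i j) ∧ Wseq n = stepGraphon n A)
    (hWseqBd : ∃ C : ℝ, ∀ n, (∫ x in I01, ∫ y in I01, |Wseq n x y|) ≤ C)
    (W : ℝ → ℝ → ℝ) (hWmeas : Measurable (Function.uncurry W))
    (hWnonneg : ∀ x y, 0 ≤ W x y) (hWsymm : ∀ x y, W x y = W y x)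
    (hWint : IntegrableOn (Function.uncurry W) (I01 ×ˢ I01))
    (hcut : Tendsto (fun n => cutNorm (fun x y => Wseq n x y - W x y)) atTop (nhds 0)) :
    GammaConv (fun (νs : ℕ → YMb) (ν : YMb) => NarrowConv (fun n => (νs n).1) ν.1)
      (fun n ν => graphGLFn n (Wseq n) ε ν.1)
      (fun ν => ((graphonGL W ε ν.1 : ℝ) : EReal)) := by
  have hW : Integrable (Function.uncurry W) (mu.prod mu) := by
    rw [Measure.prod_restrict]; exact hWint
  have hWn : ∀ n, Integrable (Function.uncurry (Wseq n)) (mu.prod mu) := by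
    intro n
    obtain ⟨A, _, _, hA⟩ := hstep n
    rw [hA]; exact stepGraphon_int n A
  have hT := GL_tendsto ε Wseq hWn W hW hcut
  have hTE : ∀ (νs : ℕ → YMb) (ν : YMb), NarrowConv (fun n => (νs n).1) ν.1 →
      Tendsto (fun n => ((graphonGL (Wseq n) ε (νs n).1 : ℝ) : EReal)) atTop
        (nhds ((graphonGL W ε ν.1 : ℝ) : EReal)) := fun νs ν h =>
    (continuous_coe_real_ereal.tendsto _).comp (hT νs ν h)
  constructor
  · intro νs ν h
    refine (hTE νs ν h).liminf_eq.symm.le.trans ?_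
    exact liminf_le_liminf (Eventually.of_forall fun n => graphGLFn_ge n (Wseq n) ε (νs n).1)
  · intro ν
    obtain ⟨u, hu1, hu2, hu3, hu4⟩ := recovery ν
    let νs : ℕ → YMb := fun n => ⟨deltaYM (u n),
      ⟨Measure.measurable_dirac.comp (hu2 n), fun x => Measure.dirac.isProbabilityMeasure⟩,
      Eventually.of_forall fun x => by
        simp only [deltaYM]
        rw [Measure.dirac_apply' _ measurableSet_Icc]
        simp [Set.indicator, hu3 n x]⟩
    refine ⟨νs, hu4, ?_⟩
    refine le_trans ?_ (hTE νs ν hu4).limsup_eq.le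
    refine limsup_le_limsup (Eventually.of_forall fun n => ?_)
    exact (graphGLFn_eq n (Wseq n) ε _ ⟨u n, hu1 n, hu2 n, hu3 n, rfl⟩).le
end
end

section
/- Let n ≥ 1 and γ ∈ ℝ with |γ| ≥ 1. (i) Every v ∈ ℝⁿ with Σ_{i=1}^n v_i = γn satisfies Σ_{i=1}^n (v_i² − 1)² ≥ n(γ² − 1)², with equality if and only if v_i = γ for all i. (ii) Consequently, for p > 0 and ε > 0 with εp < 1, and c ∈ ℝ with |c| ≥ √(1−εp), the unique minimizer of GL^A_ε(u) over u ∈ ℝⁿ subject to (1/n)Σ_{i=1}^n u_i = c, where A_{ij} = p for all i,j, is the constant vector u_i = c for all i, and the minimum value is (1/ε)(c² − 1)². -/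
noncomputable section

/-- The graph Ginzburg–Landau functional
`GL^A_ε(u) = (1/n²) Σ_{i,j} A_{ij}(u_i−u_j)² + (1/(εn)) Σ_i Φ(u_i)`. -/
def glGraph (n : ℕ) (A : Fin n → Fin n → ℝ) (ε : ℝ) (u : Fin n → ℝ) : ℝ :=
  (1 / (n : ℝ) ^ 2) * ∑ i : Fin n, ∑ j : Fin n, A i j * (u i - u j) ^ 2
    + (1 / (ε * n)) * ∑ i : Fin n, Phi (u i)

lemma key_zero (n : ℕ) (c k : ℝ) (hc : c ≠ 0) (hk : 0 ≤ k) (u : Fin n → ℝ)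
    (hu : ∑ i, (u i - c) = 0)
    (h : ∑ i, (u i - c) ^ 2 * (2 * k + (u i + c) ^ 2) = 0) : ∀ i, u i = c := by
  have h1 := (Finset.sum_eq_zero_iff_of_nonneg (fun i _ => by positivity)).1 h
  have h2 : ∀ i, u i = c ∨ u i = -c := by
    intro i
    rcases mul_eq_zero.1 (h1 i (Finset.mem_univ i)) with h3 | h3
    · left
      have := pow_eq_zero_iff (two_ne_zero) |>.1 h3
      linarith
    · right
      have h4 : (u i + c) ^ 2 = 0 := by nlinarith [sq_nonneg (u i + c)]
      have := pow_eq_zero_iff (two_ne_zero) |>.1 h4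
      linarith
  have h3 : ∑ i, (c - u i) * c = 0 := by
    rw [← Finset.sum_mul]
    have : ∑ i, (c - u i) = - ∑ i, (u i - c) := by
      rw [← Finset.sum_neg_distrib]
      exact Finset.sum_congr rfl (fun i _ => by ring)
    rw [this, hu]; ring
  have h4 := (Finset.sum_eq_zero_iff_of_nonneg (fun i _ => by
    rcases h2 i with h | h <;> rw [h] <;> nlinarith [sq_nonneg c])).1 h3
  intro i
  rcases mul_eq_zero.1 (h4 i (Finset.mem_univ i)) with h5 | h5
  · linarith
  · exact absurd h5 hc

lemma sum_expand (n : ℕ) (c k : ℝ) (u : Fin n → ℝ) (hu : ∑ i, (u i - c) = 0) :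
    ∑ i, ((u i) ^ 2 - 1) ^ 2 + 2 * (k - (c ^ 2 - 1)) * ∑ i, (u i - c) ^ 2
      = n * (c ^ 2 - 1) ^ 2 + ∑ i, (u i - c) ^ 2 * (2 * k + (u i + c) ^ 2) := by
  have h : ∑ i, (((u i) ^ 2 - 1) ^ 2 + 2 * (k - (c ^ 2 - 1)) * (u i - c) ^ 2)
      = ∑ i, ((c ^ 2 - 1) ^ 2 + (u i - c) ^ 2 * (2 * k + (u i + c) ^ 2)
        + 4 * c * (c ^ 2 - 1) * (u i - c)) :=
    Finset.sum_congr rfl (fun i _ => by ring)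
  simp only [Finset.sum_add_distrib, ← Finset.mul_sum, hu] at h
  simpa using h

lemma double_sum (n : ℕ) (c p : ℝ) (u : Fin n → ℝ) (hu : ∑ i, (u i - c) = 0) :
    ∑ i, ∑ j, p * (u i - u j) ^ 2 = 2 * p * n * ∑ i, (u i - c) ^ 2 := by
  have h : ∀ i j, p * (u i - u j) ^ 2 = p * (u i - c) ^ 2 + p * (u j - c) ^ 2
      - 2 * p * (u i - c) * (u j - c) := fun i j => by ring
  simp only [h, Finset.sum_add_distrib, Finset.sum_sub_distrib, ← Finset.mul_sum, hu]
  simp [← Finset.mul_sum]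
  ring

lemma gl_eq (n : ℕ) (hn : 1 ≤ n) (p ε c : ℝ) (hε : 0 < ε) (u : Fin n → ℝ)
    (hu : ∑ i, (u i - c) = 0) :
    glGraph n (fun _ _ => p) ε u = (1 / ε) * (c ^ 2 - 1) ^ 2
      + (1 / (ε * n)) * ∑ i, (u i - c) ^ 2 * (2 * (c ^ 2 - 1 + ε * p) + (u i + c) ^ 2) := by
  have hn0 : (n : ℝ) ≠ 0 := by positivity
  have h := sum_expand n c (c ^ 2 - 1 + ε * p) u hu
  unfold glGraph Phi
  simp only
  rw [double_sum n c p u hu]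
  rw [← sub_eq_iff_eq_add'] at h
  rw [← h]
  field_simp
  ring

/-- Non-oversaturation: for `|γ| ≥ 1`, the convexified lower bound
`Σ (v_i² − 1)² ≥ n(γ² − 1)²` holds under `Σ v_i = γn` with equality iff `v ≡ γ`; consequently
for `|c| ≥ √(1−εp)` the unique constrained minimizer of the Ginzburg–Landau functional on the
complete weighted graph is the constant vector `c`, with minimum value `(1/ε)(c² − 1)²`. -/
theorem oversaturated_minimizers (n : ℕ) (hn : 1 ≤ n) (γ : ℝ) (hγ : 1 ≤ |γ|) :
    (∀ v : Fin n → ℝ, (∑ i : Fin n, v i) = γ * n →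
      ((n : ℝ) * (γ ^ 2 - 1) ^ 2 ≤ ∑ i : Fin n, ((v i) ^ 2 - 1) ^ 2 ∧
        ((∑ i : Fin n, ((v i) ^ 2 - 1) ^ 2) = (n : ℝ) * (γ ^ 2 - 1) ^ 2 ↔
          ∀ i, v i = γ))) ∧
    (∀ p ε c : ℝ, 0 < p → 0 < ε → ε * p < 1 → Real.sqrt (1 - ε * p) ≤ |c| →
      glGraph n (fun _ _ => p) ε (fun _ => c) = (1 / ε) * (c ^ 2 - 1) ^ 2 ∧
      (∀ u : Fin n → ℝ, (1 / (n : ℝ)) * ∑ i : Fin n, u i = c →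
        glGraph n (fun _ _ => p) ε (fun _ => c) ≤ glGraph n (fun _ _ => p) ε u) ∧
      (∀ u : Fin n → ℝ, (1 / (n : ℝ)) * ∑ i : Fin n, u i = c →
        glGraph n (fun _ _ => p) ε u = glGraph n (fun _ _ => p) ε (fun _ => c) →
        u = fun _ => c)) := by
  have hn0 : (n : ℝ) ≠ 0 := by positivity
  constructor
  · intro v hv
    have hg : 1 ≤ γ ^ 2 := by rw [← sq_abs]; nlinarith
    have hu : ∑ i, (v i - γ) = 0 := by
      rw [Finset.sum_sub_distrib, hv]; simp; ring
    have h := sum_expand n γ (γ ^ 2 - 1) v hu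
    rw [sub_self, mul_zero, zero_mul, add_zero] at h
    have hk : 0 ≤ γ ^ 2 - 1 := by linarith
    have hS : 0 ≤ ∑ i, (v i - γ) ^ 2 * (2 * (γ ^ 2 - 1) + (v i + γ) ^ 2) :=
      Finset.sum_nonneg (fun i _ => by positivity)
    refine ⟨by linarith, fun he => ?_, fun he => ?_⟩
    · refine key_zero n γ (γ ^ 2 - 1) ?_ hk v hu (by linarith)
      rintro rfl
      norm_num at hg
    · simp [he]
  · intro p ε c hp hε hεp hc
    have hc2 : 1 - ε * p ≤ c ^ 2 := by
      rw [← sq_abs]; exact (Real.sqrt_le_left (abs_nonneg c)).1 hc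
    have hc0 : c ≠ 0 := by
      rintro rfl
      norm_num at hc2
      linarith
    have hk : 0 ≤ c ^ 2 - 1 + ε * p := by linarith
    have hcst : glGraph n (fun _ _ => p) ε (fun _ => c) = (1 / ε) * (c ^ 2 - 1) ^ 2 := by
      rw [gl_eq n hn p ε c hε _ (by simp)]; simp
    have hsum : ∀ u : Fin n → ℝ, (1 / (n : ℝ)) * ∑ i : Fin n, u i = c →
        ∑ i, (u i - c) = 0 := by
      intro u hu
      rw [Finset.sum_sub_distrib, ← hu]
      simp
      field_simp
      simp
    refine ⟨hcst, fun u hu => ?_, fun u hu he => ?_⟩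
    · rw [hcst, gl_eq n hn p ε c hε u (hsum u hu)]
      have : 0 ≤ (1 / (ε * n)) *
          ∑ i, (u i - c) ^ 2 * (2 * (c ^ 2 - 1 + ε * p) + (u i + c) ^ 2) :=
        mul_nonneg (by positivity) (Finset.sum_nonneg (fun i _ => by positivity))
      linarith
    · rw [hcst, gl_eq n hn p ε c hε u (hsum u hu), add_eq_left] at he
      have hne : (1 / (ε * n)) ≠ 0 := by positivity
      funext i
      exact key_zero n c _ hc0 hk u (hsum u hu) ((mul_eq_zero.1 he).resolve_left hne) i
end
end

section
/- Fix ε ∈ (0,1) and a ∈ (0,1). For n such that s := an is an integer with 0 < s < n, let S = {1,…,s}, and set c_S = √(1 − ε(1−a)/2) and c_{S^c} = √(1 − εa/2). For v ∈ ℝⁿ define α(v) = c_S Σ_{i∈S} v_i and E_n(v) = (c_S⁴/ε) Σ_{i∈S} (v_i²−1)² + (c_{S^c}⁴/ε) Σ_{i∉S} (v_i²−1)² + (2/n) c_S c_{S^c} α(v)². Then the minimum of E_n over the constraint set {v ∈ ℝⁿ : c_S Σ_{i∈S} v_i + c_{S^c} Σ_{i∉S} v_i = 0} is at most 3/ε,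 and consequently every minimizer v in this constraint set satisfies (c_S⁴/ε) Σ_{i∈S} (v_i²−1)² + (c_{S^c}⁴/ε) Σ_{i∉S} (v_i²−1)² ≤ 3/ε. -/
noncomputable section

/-- The part `S = {i : i < s}` of the bipartition, as a finset of `Fin n`. -/
def bipS (n s : ℕ) : Finset (Fin n) := Finset.univ.filter (fun i => (i : ℕ) < s)

/-- The rescaling constant `c_S = √(1 − ε(1−a)/2)`. -/
def cS (ε a : ℝ) : ℝ := Real.sqrt (1 - ε * (1 - a) / 2)

/-- The rescaling constant `c_{S^c} = √(1 − εa/2)`. -/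
def cSc (ε a : ℝ) : ℝ := Real.sqrt (1 - ε * a / 2)

/-- `α(v) = c_S Σ_{i∈S} v_i`. -/
def alphaBip (n s : ℕ) (ε a : ℝ) (v : Fin n → ℝ) : ℝ :=
  cS ε a * ∑ i ∈ bipS n s, v i

/-- The rescaled Ginzburg–Landau energy for the complete bipartite graph:
`E_n(v) = (c_S⁴/ε) Σ_{i∈S} (v_i²−1)² + (c_{S^c}⁴/ε) Σ_{i∉S} (v_i²−1)²
  + (2/n) c_S c_{S^c} α(v)²`. -/
def EnBip (n s : ℕ) (ε a : ℝ) (v : Fin n → ℝ) : ℝ :=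
  (cS ε a) ^ 4 / ε * ∑ i ∈ bipS n s, ((v i) ^ 2 - 1) ^ 2
    + (cSc ε a) ^ 4 / ε * ∑ i ∈ (bipS n s)ᶜ, ((v i) ^ 2 - 1) ^ 2
    + (2 / (n : ℝ)) * cS ε a * cSc ε a * (alphaBip n s ε a v) ^ 2

/-- The volume constraint `c_S Σ_{i∈S} v_i + c_{S^c} Σ_{i∉S} v_i = 0`. -/
def ConstrBip (n s : ℕ) (ε a : ℝ) (v : Fin n → ℝ) : Prop :=
  cS ε a * (∑ i ∈ bipS n s, v i) + cSc ε a * (∑ i ∈ (bipS n s)ᶜ, v i) = 0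

theorem exists_balanced {α : Type*} [DecidableEq α] (T : Finset α) :
    ∃ f : α → ℝ, ∑ i ∈ T, f i = 0 ∧ ∑ i ∈ T, ((f i) ^ 2 - 1) ^ 2 ≤ 1 := by
  obtain ⟨A, hAT, hA⟩ := Finset.exists_subset_card_eq (s := T) (n := T.card / 2) (by omega)
  have hc : (T \ A).card = T.card - A.card := Finset.card_sdiff_of_subset hAT
  obtain ⟨B, hBT, hB⟩ := Finset.exists_subset_card_eq (s := T \ A) (n := T.card / 2) (by omega)
  have hBT' : B ⊆ T := hBT.trans Finset.sdiff_subset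
  have hAs : ∑ i ∈ T, (if i ∈ A then (1 : ℝ) else 0) = (T.card / 2 : ℕ) := by
    rw [Finset.sum_ite_mem, Finset.inter_eq_right.2 hAT]; simp [hA]
  have hBs : ∑ i ∈ T, (if i ∈ B then (1 : ℝ) else 0) = (T.card / 2 : ℕ) := by
    rw [Finset.sum_ite_mem, Finset.inter_eq_right.2 hBT']; simp [hB]
  refine ⟨fun i => (if i ∈ A then (1 : ℝ) else 0) - (if i ∈ B then (1 : ℝ) else 0), ?_, ?_⟩
  · rw [Finset.sum_sub_distrib, hAs, hBs, sub_self]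
  · have : ∀ i ∈ T, (((if i ∈ A then (1 : ℝ) else 0) - (if i ∈ B then (1 : ℝ) else 0)) ^ 2 - 1) ^ 2
        = 1 - (if i ∈ A then (1 : ℝ) else 0) - (if i ∈ B then (1 : ℝ) else 0) := by
      intro i _
      by_cases h1 : i ∈ A
      · have h2 : i ∉ B := fun h => (Finset.mem_sdiff.1 (hBT h)).2 h1
        simp [h1, h2]
      · by_cases h2 : i ∈ B <;> simp [h1, h2]
    rw [Finset.sum_congr rfl this, Finset.sum_sub_distrib, Finset.sum_sub_distrib, hAs, hBs]
    have h3 : T.card ≤ 1 + T.card / 2 + T.card / 2 := by omega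
    have h4 : (T.card : ℝ) ≤ 1 + (T.card / 2 : ℕ) + (T.card / 2 : ℕ) := by exact_mod_cast h3
    simp only [Finset.sum_const, nsmul_eq_mul, mul_one]
    linarith

/-- Uniform energy bound for the rescaled bipartite Ginzburg–Landau energy: the constrained
minimum of `E_n` is at most `3/ε`, and consequently the double-well part of the energy of
every constrained minimizer is at most `3/ε`. -/
theorem bipartite_energy_bound (ε a : ℝ)
    (hε : ε ∈ Set.Ioo (0 : ℝ) 1) (ha : a ∈ Set.Ioo (0 : ℝ) 1)
    (n s : ℕ) (hs : (s : ℝ) = a * n) (h0 : 0 < s) (hsn : s < n) :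
    (∃ v : Fin n → ℝ, ConstrBip n s ε a v ∧ EnBip n s ε a v ≤ 3 / ε) ∧
    (∀ v : Fin n → ℝ, ConstrBip n s ε a v →
      (∀ w : Fin n → ℝ, ConstrBip n s ε a w → EnBip n s ε a v ≤ EnBip n s ε a w) →
      (cS ε a) ^ 4 / ε * (∑ i ∈ bipS n s, ((v i) ^ 2 - 1) ^ 2)
        + (cSc ε a) ^ 4 / ε * (∑ i ∈ (bipS n s)ᶜ, ((v i) ^ 2 - 1) ^ 2) ≤ 3 / ε) := by
  obtain ⟨he0, he1⟩ := hε
  obtain ⟨ha0, ha1⟩ := ha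
  have hc1 : 0 ≤ cS ε a := Real.sqrt_nonneg _
  have hc2 : 0 ≤ cSc ε a := Real.sqrt_nonneg _
  have hd1 : cS ε a ≤ 1 := by
    refine Real.sqrt_le_one.2 ?_
    nlinarith [mul_pos he0 (sub_pos.2 ha1)]
  have hd2 : cSc ε a ≤ 1 := by
    refine Real.sqrt_le_one.2 ?_
    nlinarith [mul_pos he0 ha0]
  have key : ∃ v : Fin n → ℝ, ConstrBip n s ε a v ∧ EnBip n s ε a v ≤ 3 / ε := by
    obtain ⟨f, hf0, hf1⟩ := exists_balanced (bipS n s)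
    obtain ⟨g, hg0, hg1⟩ := exists_balanced (bipS n s)ᶜ
    have e1 : ∀ i ∈ bipS n s, (if i ∈ bipS n s then f i else g i) = f i :=
      fun i hi => if_pos hi
    have e2 : ∀ i ∈ (bipS n s)ᶜ, (if i ∈ bipS n s then f i else g i) = g i :=
      fun i hi => if_neg (Finset.mem_compl.1 hi)
    refine ⟨fun i => if i ∈ bipS n s then f i else g i, ?_, ?_⟩
    · unfold ConstrBip
      rw [Finset.sum_congr rfl e1, Finset.sum_congr rfl e2, hf0, hg0]
      simp
    · unfold EnBip alphaBip
      rw [Finset.sum_congr rfl e1, hf0,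
        Finset.sum_congr rfl (fun i hi => by rw [e1 i hi] :
          ∀ i ∈ bipS n s, ((if i ∈ bipS n s then f i else g i) ^ 2 - 1) ^ 2 = ((f i) ^ 2 - 1) ^ 2),
        Finset.sum_congr rfl (fun i hi => by rw [e2 i hi] :
          ∀ i ∈ (bipS n s)ᶜ, ((if i ∈ bipS n s then f i else g i) ^ 2 - 1) ^ 2
            = ((g i) ^ 2 - 1) ^ 2)]
      have b : ∀ c x : ℝ, 0 ≤ c → c ≤ 1 → x ≤ 1 → c ^ 4 / ε * x ≤ 1 / ε := by
        intro c x h1 h2 h3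
        have h4 : c ^ 4 / ε ≤ 1 / ε :=
          div_le_div_of_nonneg_right (pow_le_one₀ h1 h2) he0.le
        have h5 : 0 ≤ c ^ 4 / ε := by positivity
        nlinarith
      have b1 := b _ _ hc1 hd1 hf1
      have b2 := b _ _ hc2 hd2 hg1
      have b3 : 0 < 1 / ε := by positivity
      have b4 : 3 / ε = 1 / ε + 1 / ε + 1 / ε := by ring
      rw [b4]
      simp only [mul_zero, ne_eq, OfNat.ofNat_ne_zero, not_false_eq_true, zero_pow]
      linarith
  refine ⟨key, ?_⟩
  intro v _ hmin
  obtain ⟨w, hw, hwE⟩ := key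
  have h := (hmin w hw).trans hwE
  have h6 : 0 ≤ (2 / (n : ℝ)) * cS ε a * cSc ε a * (alphaBip n s ε a v) ^ 2 := by positivity
  unfold EnBip at h
  linarith
end
end

section
/- Fix ε ∈ (0,1). For each even n, let S = {1,…,n/2} and let A be the adjacency matrix of the complete community-structure graph: A_{ij} = 1 if i and j both lie in S or both lie in S^c = {n/2+1,…,n}, and A_{ij} = 0 otherwise. Then there exists m(ε) > 0 with m(ε) → 1 as ε → 0⁺ such that, for every even n, every minimizer u ∈ ℝⁿ of GL^A_ε subject to Σ_{i=1}^n u_i = 0 is one of the two vectors given by u_i = σ·m(ε) for i ∈ S and u_i = −σ·m(ε) for i ∈ S^c, where σ ∈ {−1, 1}. -/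
open Filter
open scoped Classical

noncomputable section

/-- Adjacency matrix of the complete community-structure graph with communities
`S = {i : i < n/2}` and `S^c`: `A_{ij} = 1` iff `i` and `j` lie in the same community. -/
def communityA (n : ℕ) : Fin n → Fin n → ℝ :=
  fun i j => if (((i : ℕ) < n / 2) ↔ ((j : ℕ) < n / 2)) then 1 else 0

/-- Characterization of the Ginzburg–Landau minimizers on complete community-structure
graphs with two equal communities: minimizers are `±m(ε)` on the two communities, with
`m(ε) → 1` as `ε → 0⁺`. -/
theorem community_minimizers :
    ∃ m : ℝ → ℝ, (∀ ε ∈ Set.Ioo (0 : ℝ) 1, 0 < m ε) ∧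
      Tendsto m (nhdsWithin 0 (Set.Ioi 0)) (nhds 1) ∧
      ∀ ε ∈ Set.Ioo (0 : ℝ) 1, ∀ n : ℕ, Even n →
        ∀ u : Fin n → ℝ,
          ((∑ i : Fin n, u i) = 0 ∧
            ∀ v : Fin n → ℝ, (∑ i : Fin n, v i) = 0 →
              glGraph n (communityA n) ε u ≤ glGraph n (communityA n) ε v) →
          ∃ σ : ℝ, (σ = 1 ∨ σ = -1) ∧
            u = fun i : Fin n => if (i : ℕ) < n / 2 then σ * m ε else -σ * m ε := by
  refine ⟨fun _ => 1, fun _ _ => one_pos, tendsto_const_nhds, ?_⟩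
  rintro ε ⟨hε, -⟩ n ⟨k, rfl⟩ u ⟨hu, hmin⟩
  have hk2 : (k + k) / 2 = k := by omega
  rcases Nat.eq_zero_or_pos k with rfl | hk
  · exact ⟨1, Or.inl rfl, funext fun i => absurd i.2 (by omega)⟩
  have hnpos : (0 : ℝ) < ((k + k : ℕ) : ℝ) := by
    exact_mod_cast (by omega : 0 < k + k)
  have hrev : ∀ i : Fin (k + k), ((Fin.rev i : Fin (k + k)) : ℕ) < k ↔ ¬ ((i : ℕ) < k) := by
    intro i
    have := i.2
    rw [Fin.val_rev]
    omega
  -- the sum of a vector vanishes when reflections cancel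
  have hsumrev : ∀ w : Fin (k + k) → ℝ, ∑ i, w (Fin.rev i) = ∑ i, w i := fun w =>
    Equiv.sum_comp Fin.revPerm w
  -- competitor
  have hv := hmin (fun i => if (i : ℕ) < k then 1 else -1) (by
    have h := hsumrev (fun i : Fin (k + k) => if (i : ℕ) < k then (1 : ℝ) else -1)
    have h2 : ∑ i : Fin (k + k), (if ((Fin.rev i : Fin (k + k)) : ℕ) < k then (1 : ℝ) else -1)
        = - ∑ i : Fin (k + k), (if (i : ℕ) < k then (1 : ℝ) else -1) := by
      rw [← Finset.sum_neg_distrib]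
      refine Finset.sum_congr rfl fun i _ => ?_
      simp only [hrev]
      by_cases hi : (i : ℕ) < k <;> simp [hi]
    linarith)
  have hzero : glGraph (k + k) (communityA (k + k)) ε
      (fun i => if (i : ℕ) < k then 1 else -1) = 0 := by
    unfold glGraph
    have h1 : ∀ i j : Fin (k + k), communityA (k + k) i j *
        ((if (i : ℕ) < k then (1 : ℝ) else -1) - (if (j : ℕ) < k then (1 : ℝ) else -1)) ^ 2
          = 0 := by
      intro i j
      unfold communityA
      rw [hk2]
      by_cases hi : (i : ℕ) < k <;> by_cases hj : (j : ℕ) < k <;> simp [hi, hj]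
    have h2 : ∀ i : Fin (k + k), Phi (if (i : ℕ) < k then (1 : ℝ) else -1) = 0 := by
      intro i
      unfold Phi
      split_ifs <;> norm_num
    simp only [h1, h2, Finset.sum_const_zero, mul_zero, add_zero]
  rw [hzero] at hv
  unfold glGraph at hv
  have hA : ∀ i j, 0 ≤ communityA (k + k) i j * (u i - u j) ^ 2 := by
    intro i j
    refine mul_nonneg ?_ (sq_nonneg _)
    unfold communityA
    split_ifs <;> norm_num
  have hP : ∀ i, 0 ≤ Phi (u i) := fun i => sq_nonneg _
  have hS1 : 0 ≤ ∑ i, ∑ j, communityA (k + k) i j * (u i - u j) ^ 2 :=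
    Finset.sum_nonneg fun i _ => Finset.sum_nonneg fun j _ => hA i j
  have hS2 : 0 ≤ ∑ i, Phi (u i) := Finset.sum_nonneg fun i _ => hP i
  have hc1 : (0 : ℝ) < 1 / ((k + k : ℕ) : ℝ) ^ 2 := by positivity
  have hc2 : (0 : ℝ) < 1 / (ε * ((k + k : ℕ) : ℝ)) := by positivity
  have hp1 := mul_nonneg hc1.le hS1
  have hp2 := mul_nonneg hc2.le hS2
  have hz1 : ∑ i, ∑ j, communityA (k + k) i j * (u i - u j) ^ 2 = 0 :=
    (mul_eq_zero.1 (by linarith : _ * _ = (0 : ℝ))).resolve_left hc1.ne'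
  have hz2 : ∑ i, Phi (u i) = 0 :=
    (mul_eq_zero.1 (by linarith : _ * _ = (0 : ℝ))).resolve_left hc2.ne'
  have hphi : ∀ i, Phi (u i) = 0 := fun i =>
    (Finset.sum_eq_zero_iff_of_nonneg fun i _ => hP i).1 hz2 i (Finset.mem_univ i)
  have hAz : ∀ i j, communityA (k + k) i j * (u i - u j) ^ 2 = 0 := fun i j =>
    (Finset.sum_eq_zero_iff_of_nonneg fun j _ => hA i j).1
      ((Finset.sum_eq_zero_iff_of_nonneg fun i _ =>
        Finset.sum_nonneg fun j _ => hA i j).1 hz1 i (Finset.mem_univ i)) j (Finset.mem_univ j)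
  have heq : ∀ i j : Fin (k + k), ((i : ℕ) < k ↔ (j : ℕ) < k) → u i = u j := by
    intro i j hij
    have h := hAz i j
    unfold communityA at h
    rw [hk2, if_pos hij, one_mul] at h
    exact sub_eq_zero.1 (pow_eq_zero_iff two_ne_zero |>.1 h)
  let a : Fin (k + k) := ⟨0, by omega⟩
  have ha : (a : ℕ) < k := hk
  let b : Fin (k + k) := ⟨k, by omega⟩
  have hb : ¬ (b : ℕ) < k := lt_irrefl k
  have hia : ∀ i : Fin (k + k), (i : ℕ) < k → u i = u a := fun i hi =>
    heq i a ⟨fun _ => ha, fun _ => hi⟩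
  have hib : ∀ i : Fin (k + k), ¬ (i : ℕ) < k → u i = u b := fun i hi =>
    heq i b ⟨fun h => absurd h hi, fun h => absurd h hb⟩
  have hpair : ∀ i, u i + u (Fin.rev i) = u a + u b := by
    intro i
    by_cases hi : (i : ℕ) < k
    · rw [hia i hi, hib _ (fun h => (hrev i).1 h hi)]
    · rw [hib i hi, hia _ ((hrev i).2 hi), add_comm]
  have htot : ((k + k : ℕ) : ℝ) * (u a + u b) = 0 := by
    have h : ∑ i, (u i + u (Fin.rev i)) = 0 := by
      rw [Finset.sum_add_distrib, hsumrev, hu, add_zero]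
    simp only [hpair, Finset.sum_const, Finset.card_univ, Fintype.card_fin, nsmul_eq_mul] at h
    exact h
  have hab : u a + u b = 0 := (mul_eq_zero.1 htot).resolve_left hnpos.ne'
  have hua : u a = 1 ∨ u a = -1 := by
    have h : u a ^ 2 - 1 = 0 := pow_eq_zero_iff two_ne_zero |>.1 (hphi a)
    have h' : (u a - 1) * (u a + 1) = 0 := by linarith [h, sq (u a), (by ring : (u a - 1) * (u a + 1) = u a ^ 2 - 1)]
    rcases mul_eq_zero.1 h' with h1 | h1
    · left; linarith
    · right; linarith
  refine ⟨u a, hua, funext fun i => ?_⟩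
  rw [hk2]
  by_cases hi : (i : ℕ) < k
  · rw [if_pos hi, hia i hi, mul_one]
  · rw [if_neg hi, hib i hi, mul_one]
    linarith
end
end
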